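/- Let n ≥ 2, 1 < p < n, set p* = np/(n-p), let 0 ≤ a ≤ 1, let r, t ∈ (1,∞] and u, v, w ∈ [1,∞] satisfy 1/r = a/p* + (1-a)/t and 1/u = a/v + (1-a)/w. Then there exists a constant c > 0 such that for every smooth compactly supported f : ℝⁿ → ℝ, ‖f‖_{r,u} ≤ c ‖ |∇f| ‖_{p,v}^{a} · ‖f‖_{t,w}^{1-a}. -/

import Mathlib

open MeasureTheory Set ENNReal

/-- The distribution function `μ_f(λ) = μ{x : |f x| > λ}` of a function. -/
noncomputable def distribFn {α : Type*} [MeasurableSpace α] (μ : Measure α)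
    (f : α → ℝ) (l : ℝ≥0∞) : ℝ≥0∞ :=
  μ {x | l < ENNReal.ofReal |f x|}

/-- The decreasing rearrangement `f*(t) = inf {λ > 0 : μ_f(λ) ≤ t}`. -/
noncomputable def rearr {α : Type*} [MeasurableSpace α] (μ : Measure α)
    (f : α → ℝ) (t : ℝ) : ℝ≥0∞ :=
  sInf {l : ℝ≥0∞ | 0 < l ∧ distribFn μ f l ≤ ENNReal.ofReal t}

/-- The Lorentz `L^{p,q}` (quasi)norm
`‖f‖_{p,q} = (∫₀^∞ (t^{1/p} f*(t))^q dt/t)^{1/q}` for `q < ∞`, and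
`‖f‖_{p,∞} = sup_{t>0} t^{1/p} f*(t)`. -/
noncomputable def lorentz {α : Type*} [MeasurableSpace α] (μ : Measure α)
    (p q : ℝ≥0∞) (f : α → ℝ) : ℝ≥0∞ :=
  if q = ∞ then ⨆ t ∈ Ioi (0 : ℝ), ENNReal.ofReal t ^ p.toReal⁻¹ * rearr μ f t
  else (∫⁻ t in Ioi (0 : ℝ),
      (ENNReal.ofReal t ^ p.toReal⁻¹ * rearr μ f t) ^ q.toReal / ENNReal.ofReal t) ^ q.toReal⁻¹

/-!
The weight `t^{1/p} f*(t)` turns the Lorentz norm into the `L^q` norm for the dilation-invariant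
measure `dt / t`. Hölder's inequality in that space is the Hölder–Lorentz inequality, so everything
rests on `‖f‖_{p*,q} ≤ C ‖∇f‖_{p,q}`. Apply the `L¹` Sobolev inequality to a truncation of `f`
between the levels `f*(2t)` and `f*(t)`: only the gradient on the set `{|f| > f*(2t)}`, of measure
at most `2t`, contributes, which gives `f*(t) ≤ f*(2t) + C t^{1/n} A(t)` with `A` an average of
`|∇f|*` over the scales below `t`. Telescoping bounds `f*(t)` by the sum of the error terms at
`t, 2t, 4t, …`. Both this sum and `A` are superpositions of dilations, and by Minkowski's inequality
each is bounded on weighted `L^q(dt / t)` by a geometric series; these converge because `p < n` and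
`1 < p` respectively.
-/

section ENNRealValued

variable {α : Type*} [MeasurableSpace α] {μ : Measure α}

lemma eLpNorm_const_mul_of_ennreal (c : ℝ≥0∞) {F : α → ℝ≥0∞} (hF : AEMeasurable F μ) (q : ℝ≥0∞) :
    eLpNorm (fun x => c * F x) q μ = c * eLpNorm F q μ := by
  obtain rfl | hq0 := eq_or_ne q 0
  · simp
  obtain rfl | hq := eq_or_ne q ∞
  · simpa [eLpNormEssSup] using ENNReal.essSup_const_mul
  have hq_pos := ENNReal.toReal_pos hq0 hq
  simp only [eLpNorm_eq_lintegral_rpow_enorm_toReal hq0 hq, enorm_eq_self,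
    ENNReal.mul_rpow_of_nonneg _ _ hq_pos.le]
  rw [lintegral_const_mul'' _ (hF.pow_const _), ENNReal.mul_rpow_of_nonneg _ _ (by positivity),
    one_div, ENNReal.rpow_rpow_inv hq_pos.ne']

lemma eLpNorm_tsum_le_of_ennreal {F : ℕ → α → ℝ≥0∞} (hF : ∀ k, AEMeasurable (F k) μ) {q : ℝ≥0∞}
    (hq1 : 1 ≤ q) : eLpNorm (fun x => ∑' k, F k x) q μ ≤ ∑' k, eLpNorm (F k) q μ := by
  obtain rfl | hq := eq_or_ne q ∞
  · have hle : ∀ᵐ x ∂μ, ∀ k, F k x ≤ essSup (F k) μ :=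
      ae_all_iff.2 fun k => ENNReal.ae_le_essSup (F k)
    simp only [eLpNorm_exponent_top, eLpNormEssSup, enorm_eq_self]
    exact essSup_le_of_ae_le _ (hle.mono fun x hx => ENNReal.tsum_le_tsum hx)
  have hq0 : q ≠ 0 := (zero_lt_one.trans_le hq1).ne'
  have hq_pos := ENNReal.toReal_pos hq0 hq
  have h_partial (N : ℕ) : ∫⁻ x, (∑ k ∈ Finset.range N, F k x) ^ q.toReal ∂μ ≤
      (∑' k, eLpNorm (F k) q μ) ^ q.toReal := by
    have h := (eLpNorm_sum_le (s := Finset.range N)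
      (fun k _ => (hF k).aestronglyMeasurable) hq1).trans (ENNReal.sum_le_tsum _)
    simpa [eLpNorm_eq_lintegral_rpow_enorm_toReal hq0 hq, ENNReal.rpow_inv_le_iff hq_pos] using h
  have h_limit : ∫⁻ x, (∑' k, F k x) ^ q.toReal ∂μ =
      ⨆ N, ∫⁻ x, (∑ k ∈ Finset.range N, F k x) ^ q.toReal ∂μ := by
    rw [← lintegral_iSup' (fun N => (Finset.aemeasurable_fun_sum _ fun k _ => hF k).pow_const _)
      (.of_forall fun x N M hNM => ENNReal.rpow_le_rpow
        (Finset.sum_le_sum_of_subset (Finset.range_mono hNM)) hq_pos.le)]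
    refine lintegral_congr fun x => ?_
    rw [ENNReal.tsum_eq_iSup_nat]
    exact (ENNReal.orderIsoRpow q.toReal hq_pos).map_iSup _
  simp only [eLpNorm_eq_lintegral_rpow_enorm_toReal hq0 hq, enorm_eq_self, one_div]
  rw [ENNReal.rpow_inv_le_iff hq_pos, h_limit]
  simpa [eLpNorm_eq_lintegral_rpow_enorm_toReal hq0 hq] using h_partial

lemma eLpNorm_mul_le_eLpNorm_top_mul_eLpNorm_of_ennreal (f : α → ℝ≥0∞) {g : α → ℝ≥0∞}
    (hg : AEMeasurable g μ) (q : ℝ≥0∞) :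
    eLpNorm (f * g) q μ ≤ eLpNorm f ∞ μ * eLpNorm g q μ := by
  rw [← eLpNorm_const_mul_of_ennreal _ hg]
  refine eLpNorm_mono_enorm_ae ?_
  filter_upwards [ENNReal.ae_le_essSup f] with x hx
  simpa [eLpNormEssSup] using mul_le_mul_left hx (g x)

lemma eLpNorm_mul_le_of_ennreal {f g : α → ℝ≥0∞} (hf : AEMeasurable f μ) (hg : AEMeasurable g μ)
    (p q r : ℝ≥0∞) [hpqr : ENNReal.HolderTriple p q r] :
    eLpNorm (f * g) r μ ≤ eLpNorm f p μ * eLpNorm g q μ := by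
  have h_inv : r⁻¹ = p⁻¹ + q⁻¹ := ENNReal.HolderTriple.inv_eq p q r
  obtain rfl | hr0 := eq_or_ne r 0
  · simp
  obtain rfl | hp := eq_or_ne p ∞
  · obtain rfl : r = q := by simpa using h_inv
    exact eLpNorm_mul_le_eLpNorm_top_mul_eLpNorm_of_ennreal f hg r
  obtain rfl | hq := eq_or_ne q ∞
  · obtain rfl : r = p := by simpa using h_inv
    rw [mul_comm, mul_comm (eLpNorm f r μ)]
    exact eLpNorm_mul_le_eLpNorm_top_mul_eLpNorm_of_ennreal g hf r
  have hp0 : p ≠ 0 := by rintro rfl; simp_all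
  have hq0 : q ≠ 0 := by rintro rfl; simp_all
  have hr : r ≠ ∞ := by
    rintro rfl
    exact hp (ENNReal.inv_eq_zero.1 (add_eq_zero.1 (h_inv.symm.trans ENNReal.inv_top)).1)
  have h_toReal : r.toReal⁻¹ = p.toReal⁻¹ + q.toReal⁻¹ := by
    simpa [ENNReal.toReal_add, hp0, hq0] using congrArg ENNReal.toReal h_inv
  have hq_pos : 0 < q.toReal⁻¹ := inv_pos.2 (ENNReal.toReal_pos hq0 hq)
  have hrp : r.toReal < p.toReal :=
    (inv_lt_inv₀ (ENNReal.toReal_pos hp0 hp) (ENNReal.toReal_pos hr0 hr)).1 (by linarith)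
  simpa [eLpNorm_eq_lintegral_rpow_enorm_toReal, *] using
    ENNReal.lintegral_Lp_mul_le_Lq_mul_Lr (ENNReal.toReal_pos hr0 hr) hrp
      (by simpa only [one_div] using h_toReal) μ hf hg

lemma eLpNorm_rpow_mul_rpow_le_of_ennreal {f g : α → ℝ≥0∞} (hf : AEMeasurable f μ)
    (hg : AEMeasurable g μ) {a b : ℝ} (ha : 0 < a) (hb : 0 < b) {p q r : ℝ≥0∞}
    (h : 1 / r = ENNReal.ofReal a / p + ENNReal.ofReal b / q) :
    eLpNorm (fun x => f x ^ a * g x ^ b) r μ ≤ eLpNorm f p μ ^ a * eLpNorm g q μ ^ b := by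
  have : ENNReal.HolderTriple (p / ENNReal.ofReal a) (q / ENNReal.ofReal b) r := by
    refine ⟨?_⟩
    rw [ENNReal.inv_div (by simp) (by simp [ha]), ENNReal.inv_div (by simp) (by simp [hb]), ← h,
      one_div]
  have h_pow {k : α → ℝ≥0∞} {s : ℝ≥0∞} {c : ℝ} (hc : 0 < c) :
      eLpNorm (fun x => k x ^ c) (s / ENNReal.ofReal c) μ = eLpNorm k s μ ^ c := by
    simpa [ENNReal.div_mul_cancel, hc] using
      eLpNorm_enorm_rpow (p := s / ENNReal.ofReal c) (μ := μ) k hc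
  rw [← h_pow ha, ← h_pow hb]
  exact eLpNorm_mul_le_of_ennreal (hf.pow_const a) (hg.pow_const b) _ _ _

end ENNRealValued

section MulHaar

/-- The dilation-invariant measure `dt / t` on the positive half-line, encoded as the image of
Lebesgue measure under `Real.exp`, so that dilations become translations. -/
noncomputable def mulHaarReal : Measure ℝ := volume.map Real.exp

lemma lintegral_mulHaarReal {F : ℝ → ℝ≥0∞} (hF : Measurable F) :
    ∫⁻ t, F t ∂mulHaarReal = ∫⁻ t in Ioi (0 : ℝ), F t / ENNReal.ofReal t := by
  have h_subst := lintegral_image_eq_lintegral_abs_deriv_mul MeasurableSet.univ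
    (fun x _ => (Real.hasDerivAt_exp x).hasDerivWithinAt) Real.exp_injective.injOn
    (fun t => F t / ENNReal.ofReal t)
  rw [image_univ, Real.range_exp] at h_subst
  rw [h_subst, mulHaarReal, lintegral_map hF Real.measurable_exp, Measure.restrict_univ]
  refine lintegral_congr fun x => ?_
  rw [Real.abs_exp, ENNReal.mul_div_cancel (by simpa using Real.exp_pos x) ENNReal.ofReal_ne_top]

lemma ae_mulHaarReal_pos : ∀ᵐ t ∂mulHaarReal, 0 < t :=
  (ae_map_iff Real.measurable_exp.aemeasurable measurableSet_Ioi).2 (.of_forall Real.exp_pos)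

lemma measurePreserving_mul_left_mulHaarReal {b : ℝ} (hb : 0 < b) :
    MeasurePreserving (b * ·) mulHaarReal mulHaarReal := by
  refine ⟨measurable_const_mul b, ?_⟩
  have h_exp : (b * ·) ∘ Real.exp = Real.exp ∘ (Real.log b + ·) := by
    ext x
    simp [Real.exp_add, Real.exp_log hb]
  rw [mulHaarReal, Measure.map_map (measurable_const_mul b) Real.measurable_exp, h_exp,
    ← Measure.map_map Real.measurable_exp (measurable_const_add _), map_add_left_eq_self]

lemma exists_mem_Ioo_of_ae_mulHaarReal {P : ℝ → Prop} (hP : ∀ᵐ t ∂mulHaarReal, P t) {s t : ℝ}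
    (hs : 0 < s) (hst : s < t) : ∃ x ∈ Ioo s t, P x := by
  have h_dense : Dense {x : ℝ | P (Real.exp x)} :=
    Measure.dense_of_ae (ae_of_ae_map Real.measurable_exp.aemeasurable hP)
  obtain ⟨x, hx, hsx, hxt⟩ := h_dense.exists_between (Real.log_lt_log hs hst)
  exact ⟨Real.exp x, ⟨(Real.log_lt_iff_lt_exp hs).1 hsx,
    (Real.lt_log_iff_exp_lt (hs.trans hst)).1 hxt⟩, hx⟩

lemma eLpNorm_rpow_mul_tsum_dilation_le {F : ℝ → ℝ≥0∞} (hF : Measurable F) {q : ℝ≥0∞}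
    (hq : 1 ≤ q) (θ : ℝ) (c : ℕ → ℝ≥0∞) {b : ℕ → ℝ} (hb : ∀ k, 0 < b k) :
    eLpNorm (fun t => ENNReal.ofReal t ^ θ * ∑' k, c k * F (b k * t)) q mulHaarReal ≤
      (∑' k, c k * ENNReal.ofReal (b k) ^ (-θ)) *
        eLpNorm (fun t => ENNReal.ofReal t ^ θ * F t) q mulHaarReal := by
  set G : ℝ → ℝ≥0∞ := fun t => ENNReal.ofReal t ^ θ * F t with hG
  have hG_meas : Measurable G := by fun_prop
  have h_term (k : ℕ) (t : ℝ) : ENNReal.ofReal t ^ θ * (c k * F (b k * t)) =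
      c k * ENNReal.ofReal (b k) ^ (-θ) * G (b k * t) := by
    have hbk : ENNReal.ofReal (b k) ≠ 0 := by simpa using hb k
    have h_cancel : ENNReal.ofReal (b k) ^ (-θ) * ENNReal.ofReal (b k) ^ θ = 1 := by
      rw [← ENNReal.rpow_add _ _ hbk ENNReal.ofReal_ne_top, neg_add_cancel, ENNReal.rpow_zero]
    simp only [hG, ENNReal.ofReal_mul (hb k).le,
      ENNReal.mul_rpow_of_ne_top ENNReal.ofReal_ne_top ENNReal.ofReal_ne_top]
    calc _ = (ENNReal.ofReal (b k) ^ (-θ) * ENNReal.ofReal (b k) ^ θ) *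
          (ENNReal.ofReal t ^ θ * (c k * F (b k * t))) := by rw [h_cancel, one_mul]
      _ = _ := by ring
  calc _ = eLpNorm (fun t => ∑' k, c k * ENNReal.ofReal (b k) ^ (-θ) * G (b k * t)) q
        mulHaarReal := by
        simp only [← ENNReal.tsum_mul_left, h_term]
    _ ≤ ∑' k, eLpNorm (fun t => c k * ENNReal.ofReal (b k) ^ (-θ) * G (b k * t)) q mulHaarReal :=
        eLpNorm_tsum_le_of_ennreal (fun k => by fun_prop) hq
    _ = ∑' k, c k * ENNReal.ofReal (b k) ^ (-θ) * eLpNorm G q mulHaarReal := by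
        refine tsum_congr fun k => ?_
        rw [eLpNorm_const_mul_of_ennreal _ (by fun_prop)]
        congr 1
        exact eLpNorm_comp_measurePreserving (f := (b k * ·)) (g := G)
          hG_meas.aestronglyMeasurable (measurePreserving_mul_left_mulHaarReal (hb k))
    _ = _ := ENNReal.tsum_mul_right

end MulHaar

section Rearrangement

variable {α : Type*} [MeasurableSpace α] (μ : Measure α) (f : α → ℝ)

lemma rearr_antitone : Antitone (rearr μ f) :=
  fun _ _ hst => sInf_le_sInf fun _ hl => ⟨hl.1, hl.2.trans (ENNReal.ofReal_le_ofReal hst)⟩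

@[fun_prop]
lemma measurable_rearr : Measurable (rearr μ f) := (rearr_antitone μ f).measurable

lemma distribFn_rearr_le (t : ℝ) : distribFn μ f (rearr μ f t) ≤ ENNReal.ofReal t := by
  obtain ⟨l, h_anti, h_lim, h_mem⟩ := exists_seq_tendsto_sInf
    (S := {l : ℝ≥0∞ | 0 < l ∧ distribFn μ f l ≤ ENNReal.ofReal t})
    ⟨∞, by simp, by simp [distribFn]⟩ (OrderBot.bddBelow _)
  have h_cover : {x | rearr μ f t < ENNReal.ofReal |f x|} ⊆
      ⋃ k, {x | l k < ENNReal.ofReal |f x|} := fun x hx =>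
    mem_iUnion.2 (h_lim.eventually_lt_const hx).exists
  have h_mono : Monotone fun k => {x | l k < ENNReal.ofReal |f x|} :=
    fun i j hij x hx => (h_anti hij).trans_lt hx
  refine (measure_mono h_cover).trans ?_
  rw [h_mono.measure_iUnion]
  exact iSup_le fun k => (h_mem k).2

variable {μ f} in
lemma lt_distribFn_of_lt_rearr {t : ℝ} {l : ℝ≥0∞} (hl : 0 < l) (h : l < rearr μ f t) :
    ENNReal.ofReal t < distribFn μ f l :=
  not_le.1 fun hle => h.not_ge (sInf_le ⟨hl, hle⟩)

variable {μ f} in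
lemma rearr_eq_zero_of_measure_support_le {t : ℝ}
    (h : μ (Function.support f) ≤ ENNReal.ofReal t) : rearr μ f t = 0 := by
  refine le_antisymm (le_of_forall_gt fun l hl => ?_) zero_le
  obtain ⟨m, hm, hml⟩ := exists_between hl
  have h_sub : {x | m < ENNReal.ofReal |f x|} ⊆ Function.support f := fun x hx hfx => by
    simp [hfx] at hx
  have h_le : rearr μ f t ≤ m := sInf_le ⟨hm, (measure_mono h_sub).trans h⟩
  exact h_le.trans_lt hml

variable {μ f} in
lemma le_rearr_of_lt_distribFn {t : ℝ} {l : ℝ≥0∞} (h : ENNReal.ofReal t < distribFn μ f l) :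
    l ≤ rearr μ f t := by
  refine le_sInf fun m hm => le_of_not_ge fun hml => ?_
  exact (h.trans_le (measure_mono fun x hx => hml.trans_lt hx)).not_ge hm.2

variable {μ f} in
lemma exists_forall_mem_Ioo_lt_rearr {t : ℝ} (ht : 0 ≤ t) {l : ℝ≥0∞} (h : l < rearr μ f t) :
    ∃ s > t, ∀ x ∈ Ioo t s, l < rearr μ f x := by
  obtain ⟨m, hlm, hm⟩ := exists_between h
  obtain ⟨s, -, hts, hs⟩ := ENNReal.lt_iff_exists_real_btwn.1
    (lt_distribFn_of_lt_rearr (pos_of_gt hlm) hm)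
  refine ⟨s, (ENNReal.ofReal_lt_ofReal_iff_of_nonneg ht).1 hts, fun x hx => ?_⟩
  exact hlm.trans_le (le_rearr_of_lt_distribFn
    ((ENNReal.ofReal_le_ofReal hx.2.le).trans_lt hs))

lemma iSup_rpow_mul_rearr_eq_essSup {β : ℝ} (hβ : 0 ≤ β) :
    ⨆ t ∈ Ioi (0 : ℝ), ENNReal.ofReal t ^ β * rearr μ f t =
      essSup (fun t => ENNReal.ofReal t ^ β * rearr μ f t) mulHaarReal := by
  refine le_antisymm (iSup₂_le fun t ht => ?_) (essSup_le_of_ae_le _ ?_)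
  · refine ENNReal.mul_le_of_forall_lt fun l hl m hm => ?_
    obtain ⟨s, hts, hs⟩ := exists_forall_mem_Ioo_lt_rearr (le_of_lt ht) hm
    obtain ⟨x, hx, hx_le⟩ := exists_mem_Ioo_of_ae_mulHaarReal (ENNReal.ae_le_essSup
      fun t => ENNReal.ofReal t ^ β * rearr μ f t) ht hts
    refine le_trans ?_ hx_le
    have := hs x hx
    have := hx.1.le
    calc _ ≤ ENNReal.ofReal t ^ β * rearr μ f x := by gcongr
      _ ≤ _ := by gcongr
  · filter_upwards [ae_mulHaarReal_pos] with t ht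
    exact le_iSup₂ (f := fun t (_ : t ∈ Ioi (0 : ℝ)) => ENNReal.ofReal t ^ β * rearr μ f t) t ht

lemma lorentz_eq_eLpNorm (p : ℝ≥0∞) {q : ℝ≥0∞} (hq : q ≠ 0) :
    lorentz μ p q f =
      eLpNorm (fun t => ENNReal.ofReal t ^ p.toReal⁻¹ * rearr μ f t) q mulHaarReal := by
  obtain rfl | hq_top := eq_or_ne q ∞
  · rw [lorentz, if_pos rfl, eLpNorm_exponent_top]
    exact iSup_rpow_mul_rearr_eq_essSup μ f (inv_nonneg.2 ENNReal.toReal_nonneg)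
  · rw [lorentz, if_neg hq_top, eLpNorm_eq_lintegral_rpow_enorm_toReal hq hq_top]
    simp only [enorm_eq_self, one_div]
    rw [lintegral_mulHaarReal (by fun_prop)]

end Rearrangement

section HolderLorentz

variable {α : Type*} [MeasurableSpace α] (μ : Measure α) (f : α → ℝ)

lemma lorentz_le_lorentz_rpow_mul_lorentz_rpow {r s t u v w : ℝ≥0∞} (hs : s ≠ 0) (ht : t ≠ 0)
    (hv : v ≠ 0) (hw : w ≠ 0) {a : ℝ} (ha0 : 0 ≤ a) (ha1 : a ≤ 1)
    (hr : 1 / r = ENNReal.ofReal a / s + ENNReal.ofReal (1 - a) / t)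
    (hu : 1 / u = ENNReal.ofReal a / v + ENNReal.ofReal (1 - a) / w) :
    lorentz μ r u f ≤ lorentz μ s v f ^ a * lorentz μ t w f ^ (1 - a) := by
  obtain rfl | ha0 := ha0.eq_or_lt
  · obtain rfl : r = t := by simpa using hr
    obtain rfl : u = w := by simpa using hu
    simp
  obtain rfl | ha1 := ha1.eq_or_lt
  · obtain rfl : r = s := by simpa using hr
    obtain rfl : u = v := by simpa using hu
    simp
  have hb0 : 0 < 1 - a := sub_pos.2 ha1
  have hu0 : u ≠ 0 := by
    rintro rfl
    simp [ENNReal.div_eq_top, hv, hw, eq_comm (a := ∞)] at hu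
  have h_exp : r.toReal⁻¹ = s.toReal⁻¹ * a + t.toReal⁻¹ * (1 - a) := by
    have := congrArg ENNReal.toReal hr
    rw [ENNReal.toReal_add (by simp [ENNReal.div_eq_top, hs]) (by simp [ENNReal.div_eq_top, ht])]
      at this
    simpa [ENNReal.toReal_div, ENNReal.toReal_ofReal, ha0.le, ha1.le, div_eq_inv_mul] using this
  simp only [lorentz_eq_eLpNorm μ f _ hu0, lorentz_eq_eLpNorm μ f _ hv,
    lorentz_eq_eLpNorm μ f _ hw]
  set F : ℝ → ℝ≥0∞ := fun x => ENNReal.ofReal x ^ s.toReal⁻¹ * rearr μ f x with hF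
  set G : ℝ → ℝ≥0∞ := fun x => ENNReal.ofReal x ^ t.toReal⁻¹ * rearr μ f x with hG
  have h_interp (x : ℝ) :
      ENNReal.ofReal x ^ r.toReal⁻¹ * rearr μ f x = F x ^ a * G x ^ (1 - a) := by
    simp only [hF, hG, ENNReal.mul_rpow_of_nonneg _ _ ha0.le,
      ENNReal.mul_rpow_of_nonneg _ _ hb0.le, ← ENNReal.rpow_mul]
    rw [h_exp, ENNReal.rpow_add_of_nonneg _ _ (by positivity) (by positivity),
      mul_mul_mul_comm, ← ENNReal.rpow_add_of_nonneg _ _ ha0.le hb0.le, add_sub_cancel,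
      ENNReal.rpow_one]
  simp only [h_interp]
  exact eLpNorm_rpow_mul_rpow_le_of_ennreal (by fun_prop) (by fun_prop) ha0 hb0 hu

end HolderLorentz

section DyadicAverage

lemma subset_iUnion_sdiff_union_iInter {α : Type*} {A S : ℕ → Set α} (h : ∀ k, S k ⊆ A (k + 1)) :
    A 0 ⊆ (⋃ k, A k \ S k) ∪ ⋂ k, S k := by
  classical
  refine fun x hx => or_iff_not_imp_right.2 fun hxS => ?_
  have h_ex : ∃ k, x ∉ S k := by simpa using hxS
  refine mem_iUnion.2 ⟨Nat.find h_ex, ?_, Nat.find_spec h_ex⟩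
  cases h_find : Nat.find h_ex with
  | zero => exact hx
  | succ k => exact h k (not_not.1 (Nat.find_min h_ex (h_find ▸ k.lt_succ_self)))

variable {α : Type*} [MeasurableSpace α] (μ : Measure α) (g : α → ℝ)

/-- The dyadic Riemann sum `∑ₖ 2⁻ᵏ g*(2⁻ᵏ t)` of the maximal average
`g**(t) = t⁻¹ ∫₀ᵗ g*(s) ds` of the decreasing rearrangement, which it replaces here. -/
noncomputable def dyadicAverage (t : ℝ) : ℝ≥0∞ :=
  ∑' k : ℕ, ENNReal.ofReal ((1 / 2) ^ k) * rearr μ g ((1 / 2) ^ k * t)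

@[fun_prop]
lemma measurable_dyadicAverage : Measurable (dyadicAverage μ g) :=
  .tsum fun k => by fun_prop

variable {μ} in
lemma setLIntegral_le_mul_dyadicAverage {E : Set α} {t : ℝ} (hE : μ E ≤ ENNReal.ofReal (2 * t)) :
    ∫⁻ x in E, ENNReal.ofReal |g x| ∂μ ≤ ENNReal.ofReal (2 * t) * dyadicAverage μ g t := by
  let S (k : ℕ) : Set α := {x | rearr μ g ((1 / 2) ^ k * t) < ENNReal.ofReal |g x|}
  let A : ℕ → Set α
    | 0 => E
    | k + 1 => S k
  have hS (k : ℕ) : μ (S k) ≤ ENNReal.ofReal ((1 / 2) ^ k * t) := distribFn_rearr_le μ g _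
  have hA (k : ℕ) : μ (A k) ≤ ENNReal.ofReal ((1 / 2) ^ k * (2 * t)) := by
    cases k with
    | zero => simpa using hE
    | succ k => exact (hS k).trans_eq (by ring_nf)
  have h_null : μ (⋂ k, S k) = 0 := by
    have h_lim :
        Filter.Tendsto (fun k : ℕ => ENNReal.ofReal ((1 / 2) ^ k * t)) .atTop (nhds 0) := by
      simpa using ENNReal.tendsto_ofReal ((tendsto_pow_atTop_nhds_zero_of_lt_one
        (by norm_num) (by norm_num : (1 / 2 : ℝ) < 1)).mul_const t)
    exact le_antisymm
      (ge_of_tendsto' h_lim fun k => (measure_mono (iInter_subset S k)).trans (hS k)) zero_le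
  have h_cover : E ⊆ (⋃ k, A k \ S k) ∪ ⋂ k, S k :=
    subset_iUnion_sdiff_union_iInter (A := A) fun _ => subset_rfl
  calc ∫⁻ x in E, ENNReal.ofReal |g x| ∂μ
      ≤ ∫⁻ x in ⋃ k, A k \ S k, ENNReal.ofReal |g x| ∂μ := by
        refine (lintegral_mono_set h_cover).trans ((lintegral_union_le _ _ _).trans_eq ?_)
        rw [setLIntegral_measure_zero _ _ h_null, add_zero]
    _ ≤ ∑' k, ∫⁻ x in A k \ S k, ENNReal.ofReal |g x| ∂μ := lintegral_iUnion_le _ _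
    _ ≤ ∑' k : ℕ, ∫⁻ _ in A k \ S k, rearr μ g ((1 / 2) ^ k * t) ∂μ :=
        ENNReal.tsum_le_tsum fun k => setLIntegral_mono measurable_const fun x hx => not_lt.1 hx.2
    _ ≤ ∑' k : ℕ, rearr μ g ((1 / 2) ^ k * t) * ENNReal.ofReal ((1 / 2) ^ k * (2 * t)) := by
        simp only [setLIntegral_const]
        gcongr with k
        exact (measure_mono sdiff_subset).trans (hA k)
    _ = ENNReal.ofReal (2 * t) * dyadicAverage μ g t := by
        rw [dyadicAverage, ← ENNReal.tsum_mul_left]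
        refine tsum_congr fun k => ?_
        rw [ENNReal.ofReal_mul (by positivity)]
        ring

lemma tsum_ofReal_pow_rpow_ne_top {r s : ℝ} (hr0 : 0 ≤ r) (hr1 : r < 1) (hs : 0 < s) :
    ∑' k : ℕ, ENNReal.ofReal (r ^ k) ^ s ≠ ∞ := by
  have h_ratio : ENNReal.ofReal r ^ s < 1 := ENNReal.rpow_lt_one (by simpa using hr1) hs
  have h_pow (k : ℕ) : ENNReal.ofReal (r ^ k) ^ s = (ENNReal.ofReal r ^ s) ^ k := by
    rw [ENNReal.ofReal_pow hr0, ← ENNReal.rpow_natCast, ← ENNReal.rpow_natCast,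
      ← ENNReal.rpow_mul, ← ENNReal.rpow_mul, mul_comm]
  simp only [h_pow, ENNReal.tsum_geometric]
  exact ENNReal.inv_ne_top.2 (tsub_pos_of_lt h_ratio).ne'

lemma eLpNorm_rpow_mul_dyadicAverage_le {q : ℝ≥0∞} (hq : 1 ≤ q) (θ : ℝ) :
    eLpNorm (fun t => ENNReal.ofReal t ^ θ * dyadicAverage μ g t) q mulHaarReal ≤
      (∑' k : ℕ, ENNReal.ofReal ((1 / 2) ^ k) ^ (1 - θ)) *
        eLpNorm (fun t => ENNReal.ofReal t ^ θ * rearr μ g t) q mulHaarReal := by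
  refine (eLpNorm_rpow_mul_tsum_dilation_le (measurable_rearr μ g) hq θ _
    fun k => by positivity).trans_eq ?_
  congr 1
  refine tsum_congr fun k => ?_
  rw [sub_eq_add_neg, ENNReal.rpow_add _ _ (by simp) ENNReal.ofReal_ne_top, ENNReal.rpow_one]

end DyadicAverage

section Truncation

lemma exists_abs_deriv_smoothTransition_le :
    ∃ M : ℝ, ∀ x, |deriv Real.smoothTransition x| ≤ M := by
  have h_supp : HasCompactSupport (deriv Real.smoothTransition) := by
    refine .intro (isCompact_Icc (a := (0 : ℝ)) (b := 1)) fun x hx => ?_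
    rcases lt_or_ge x 0 with h0 | h0
    · refine IsLocalMin.deriv_eq_zero (.of_forall fun y => ?_)
      simpa [Real.smoothTransition.zero_of_nonpos h0.le] using Real.smoothTransition.nonneg y
    · have h1 : 1 < x := not_le.1 fun h1 => hx ⟨h0, h1⟩
      refine IsLocalMax.deriv_eq_zero (.of_forall fun y => ?_)
      simpa [Real.smoothTransition.one_of_one_le h1.le] using Real.smoothTransition.le_one y
  obtain ⟨M, hM⟩ := ((Real.smoothTransition.contDiff (n := 1)).continuous_deriv
    le_rfl).bounded_above_of_compact_support h_supp
  exact ⟨M, hM⟩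

lemma exists_contDiff_cutoff_abs_deriv_le :
    ∃ M : ℝ, ∀ a b : ℝ, a < b → ∃ φ : ℝ → ℝ, ContDiff ℝ 1 φ ∧ (∀ s, 0 ≤ φ s) ∧
      (∀ s, |s| ≤ a → φ s = 0) ∧ (∀ s, b ≤ |s| → 1 ≤ φ s) ∧ ∀ s, |deriv φ s| ≤ M / (b - a) := by
  obtain ⟨M, hM⟩ := exists_abs_deriv_smoothTransition_le
  refine ⟨2 * M, fun a b hab => ?_⟩
  have h_sub : 0 < b - a := sub_pos.2 hab
  let ψ := Real.smoothTransition
  have hψ : ContDiff ℝ 1 ψ := Real.smoothTransition.contDiff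
  have h_deriv (s : ℝ) : HasDerivAt ψ (deriv ψ s) s :=
    (hψ.differentiable one_ne_zero s).hasDerivAt
  have h_zero {s : ℝ} (hs : s ≤ a) : ψ ((s - a) / (b - a)) = 0 :=
    Real.smoothTransition.zero_of_nonpos (div_nonpos_of_nonpos_of_nonneg (by linarith) h_sub.le)
  have h_one {s : ℝ} (hs : b ≤ s) : ψ ((s - a) / (b - a)) = 1 :=
    Real.smoothTransition.one_of_one_le ((one_le_div h_sub).2 (by linarith))
  have h_nonneg (s : ℝ) : 0 ≤ ψ s := Real.smoothTransition.nonneg s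
  refine ⟨fun s => ψ ((s - a) / (b - a)) + ψ ((-s - a) / (b - a)), by fun_prop,
    fun s => add_nonneg (h_nonneg _) (h_nonneg _), fun s hs => ?_, fun s hs => ?_, fun s => ?_⟩
  · simp [h_zero (abs_le'.1 hs).1, h_zero (abs_le'.1 hs).2]
  · rcases le_abs.1 hs with hs | hs <;> simp [h_one hs, h_nonneg]
  · have h_right := (h_deriv _).comp s (((hasDerivAt_id s).sub_const a).div_const (b - a))
    have h_left := (h_deriv _).comp s (((hasDerivAt_neg s).sub_const a).div_const (b - a))
    have h_sum : HasDerivAt (fun s => ψ ((s - a) / (b - a)) + ψ ((-s - a) / (b - a))) _ s :=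
      h_right.add h_left
    rw [h_sum.deriv]
    refine (abs_add_le _ _).trans ?_
    simp only [abs_mul, abs_div, abs_neg, abs_one, abs_of_pos h_sub]
    calc _ ≤ M * (1 / (b - a)) + M * (1 / (b - a)) := by gcongr <;> apply hM
      _ = 2 * M / (b - a) := by ring

open Module

variable {E : Type*} [NormedAddCommGroup E] [NormedSpace ℝ E] [MeasurableSpace E] (μ : Measure E)

lemma lintegral_enorm_fderiv_comp_le {φ : ℝ → ℝ} (hφ : Differentiable ℝ φ)
    (hφ_nonneg : ∀ s, 0 ≤ φ s) {a L : ℝ} (hφ_zero : ∀ s, |s| ≤ a → φ s = 0)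
    (hφ_deriv : ∀ s, |deriv φ s| ≤ L) {f : E → ℝ} (hf : Differentiable ℝ f) :
    ∫⁻ x, ‖fderiv ℝ (φ ∘ f) x‖ₑ ∂μ ≤
      ENNReal.ofReal L * ∫⁻ x in {x | a < |f x|}, ‖fderiv ℝ f x‖ₑ ∂μ := by
  have h_pointwise (x : E) : ‖fderiv ℝ (φ ∘ f) x‖ₑ ≤
      {x | a < |f x|}.indicator (fun x => ENNReal.ofReal L * ‖fderiv ℝ f x‖ₑ) x := by
    by_cases hx : a < |f x|
    · have h_chain := (hφ (f x)).hasDerivAt.comp_hasFDerivAt x (hf x).hasFDerivAt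
      rw [indicator_of_mem (by exact hx), h_chain.fderiv, enorm_smul, Real.enorm_eq_ofReal_abs]
      gcongr
      exact hφ_deriv _
    · have h_min : IsLocalMin (φ ∘ f) x := .of_forall fun y => by
        simpa [hφ_zero _ (not_lt.1 hx)] using hφ_nonneg (f y)
      rw [h_min.fderiv_eq_zero, ← ofReal_norm, norm_zero, ENNReal.ofReal_zero]
      exact zero_le
  rw [← lintegral_const_mul' _ _ ENNReal.ofReal_ne_top]
  exact (lintegral_mono h_pointwise).trans (lintegral_indicator_le _ _)

variable [FiniteDimensional ℝ E] [BorelSpace E] [μ.IsAddHaarMeasure]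

lemma exists_measure_one_le_enorm_rpow_le_lintegral_fderiv (hE : 1 < finrank ℝ E) :
    ∃ C : NNReal, ∀ u : E → ℝ, ContDiff ℝ 1 u → HasCompactSupport u →
      μ {x | 1 ≤ ‖u x‖ₑ} ^ (1 - (finrank ℝ E : ℝ)⁻¹) ≤ C * ∫⁻ x, ‖fderiv ℝ u x‖ₑ ∂μ := by
  have h_conj := NNReal.HolderConjugate.conjExponent (p := (finrank ℝ E : NNReal))
    (by exact_mod_cast hE)
  set q := NNReal.conjExponent (finrank ℝ E)
  have hq0 : (q : ℝ≥0∞) ≠ 0 := by exact_mod_cast h_conj.symm.ne_zero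
  refine ⟨eLpNormLESNormFDerivOneConst μ q, fun u hu h_supp => ?_⟩
  have h_markov := pow_mul_meas_ge_le_eLpNorm μ hq0 ENNReal.coe_ne_top
    hu.continuous.aestronglyMeasurable 1
  have h_sobolev := eLpNorm_le_eLpNorm_fderiv_one μ hu h_supp h_conj
  rw [eLpNorm_one_eq_lintegral_enorm] at h_sobolev
  have h_inv : 1 - (finrank ℝ E : ℝ)⁻¹ = 1 / (q : ℝ) := by
    have := h_conj.coe.inv_add_inv_eq_one
    simp only [NNReal.coe_natCast] at this
    rw [one_div]
    linarith
  have hq_pos : 0 < (q : ℝ) := by exact_mod_cast h_conj.symm.pos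
  rw [h_inv]
  have h_set : {x | 1 ≤ ‖u x‖ₑ ^ (q : ℝ)} = {x | 1 ≤ ‖u x‖ₑ} := by
    ext x
    simpa using ENNReal.rpow_le_rpow_iff (x := 1) (y := ‖u x‖ₑ) hq_pos
  simpa [h_set] using h_markov.trans h_sobolev

lemma exists_sub_mul_distribFn_rpow_le_setLIntegral_fderiv (hE : 1 < finrank ℝ E) :
    ∃ C : NNReal, ∀ f : E → ℝ, ContDiff ℝ 1 f → HasCompactSupport f → ∀ a b : ℝ≥0∞,
      (b - a) * distribFn μ f b ^ (1 - (finrank ℝ E : ℝ)⁻¹) ≤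
        C * ∫⁻ x in {x | a < ENNReal.ofReal |f x|}, ‖fderiv ℝ f x‖ₑ ∂μ := by
  have h_exp : 0 < 1 - (finrank ℝ E : ℝ)⁻¹ :=
    sub_pos.2 (inv_lt_one_of_one_lt₀ (by exact_mod_cast hE))
  obtain ⟨M, hM⟩ := exists_contDiff_cutoff_abs_deriv_le
  obtain ⟨K, hK⟩ := exists_measure_one_le_enorm_rpow_le_lintegral_fderiv μ hE
  refine ⟨M.toNNReal * K, fun f hf h_supp a b => ?_⟩
  obtain rfl | hb := eq_or_ne b ∞
  · simp [distribFn, h_exp]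
  obtain hba | hab := le_or_gt b a
  · simp [tsub_eq_zero_of_le hba]
  lift b to NNReal using hb
  lift a to NNReal using ne_top_of_lt hab
  have h_sub : 0 < (b : ℝ) - a := sub_pos.2 (by exact_mod_cast hab)
  obtain ⟨φ, hφ, hφ_nonneg, hφ_zero, hφ_one, hφ_deriv⟩ := hM a b (sub_pos.1 h_sub)
  have h_superlevel (c : NNReal) : {x | (c : ℝ≥0∞) < ENNReal.ofReal |f x|} = {x | c < |f x|} := by
    ext x
    simp [ENNReal.lt_ofReal_iff_toReal_lt]
  have h_level : distribFn μ f b ≤ μ {x | 1 ≤ ‖(φ ∘ f) x‖ₑ} := by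
    rw [distribFn, h_superlevel]
    refine measure_mono fun x hx => ?_
    simpa [Real.enorm_eq_ofReal_abs] using (hφ_one _ (le_of_lt hx)).trans (le_abs_self _)
  have h_comp := lintegral_enorm_fderiv_comp_le μ (hφ.differentiable one_ne_zero) hφ_nonneg
    hφ_zero hφ_deriv (hf.differentiable one_ne_zero)
  rw [h_superlevel]
  calc ((b : ℝ≥0∞) - a) * distribFn μ f b ^ (1 - (finrank ℝ E : ℝ)⁻¹)
      ≤ ENNReal.ofReal (b - a) * (K * (ENNReal.ofReal (M / (b - a)) *
          ∫⁻ x in {x | a < |f x|}, ‖fderiv ℝ f x‖ₑ ∂μ)) := by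
        rw [ENNReal.ofReal_sub _ a.coe_nonneg, ENNReal.ofReal_coe_nnreal, ENNReal.ofReal_coe_nnreal]
        gcongr
        refine (ENNReal.rpow_le_rpow h_level h_exp.le).trans ?_
        refine (hK _ (hφ.comp hf) (h_supp.comp_left (hφ_zero 0 (by simp)))).trans ?_
        gcongr
    _ = ENNReal.ofReal (b - a) * ENNReal.ofReal (M / (b - a)) * K *
          ∫⁻ x in {x | a < |f x|}, ‖fderiv ℝ f x‖ₑ ∂μ := by ring
    _ = _ := by
        rw [← ENNReal.ofReal_mul h_sub.le, mul_div_cancel₀ _ h_sub.ne', ENNReal.coe_mul,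
          ENNReal.ofReal]

end Truncation

section Sobolev

open Module

lemma le_tsum_of_le_add_of_tendsto_zero {x y : ℕ → ℝ≥0∞} (h : ∀ k, x k ≤ x (k + 1) + y k)
    (hx : Filter.Tendsto x .atTop (nhds 0)) : x 0 ≤ ∑' k, y k := by
  have h_sum (K : ℕ) : x 0 ≤ x K + ∑' k, y k := by
    suffices x 0 ≤ x K + ∑ k ∈ Finset.range K, y k from
      this.trans (by gcongr; exact ENNReal.sum_le_tsum _)
    induction K with
    | zero => simp
    | succ K ih =>
      calc x 0 ≤ x K + ∑ k ∈ Finset.range K, y k := ih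
        _ ≤ x (K + 1) + y K + ∑ k ∈ Finset.range K, y k := by gcongr; exact h K
        _ = _ := by rw [Finset.sum_range_succ]; ring
  have h_lim : Filter.Tendsto (fun K => x K + ∑' k, y k) .atTop (nhds (0 + ∑' k, y k)) :=
    hx.add tendsto_const_nhds
  exact (ge_of_tendsto' h_lim h_sum).trans_eq (zero_add _)

lemma tendsto_rearr_two_pow_mul {α : Type*} [MeasurableSpace α] {μ : Measure α} {f : α → ℝ}
    (hf : μ (Function.support f) ≠ ∞) {t : ℝ} (ht : 0 < t) :
    Filter.Tendsto (fun k : ℕ => rearr μ f (2 ^ k * t)) .atTop (nhds 0) := by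
  have h_atTop : Filter.Tendsto (fun k : ℕ => (2 : ℝ) ^ k * t) .atTop .atTop :=
    Filter.Tendsto.atTop_mul_const ht (tendsto_pow_atTop_atTop_of_one_lt one_lt_two)
  refine tendsto_const_nhds.congr' ?_
  filter_upwards [h_atTop.eventually_ge_atTop (μ (Function.support f)).toReal] with k hk
  exact (rearr_eq_zero_of_measure_support_le
    ((ENNReal.ofReal_toReal hf).symm.trans_le (ENNReal.ofReal_le_ofReal hk))).symm

variable {E : Type*} [NormedAddCommGroup E] [NormedSpace ℝ E] [FiniteDimensional ℝ E]
  [MeasurableSpace E] [BorelSpace E] (μ : Measure E) [μ.IsAddHaarMeasure]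

lemma exists_rearr_le_rearr_two_mul_add (hE : 1 < finrank ℝ E) :
    ∃ C : NNReal, ∀ f : E → ℝ, ContDiff ℝ 1 f → HasCompactSupport f → ∀ t : ℝ, 0 < t →
      rearr μ f t ≤ rearr μ f (2 * t) + C * (ENNReal.ofReal t ^ (finrank ℝ E : ℝ)⁻¹ *
        dyadicAverage μ (fun x => ‖fderiv ℝ f x‖) t) := by
  obtain ⟨C, hC⟩ := exists_sub_mul_distribFn_rpow_le_setLIntegral_fderiv μ hE
  refine ⟨2 * C, fun f hf h_supp t ht => le_of_forall_lt_imp_le_of_dense fun l hl => ?_⟩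
  obtain rfl | hl0 := eq_zero_or_pos l
  · exact zero_le
  set n : ℝ := (finrank ℝ E : ℝ)
  set A := dyadicAverage μ (fun x => ‖fderiv ℝ f x‖) t
  set T := ENNReal.ofReal t
  have hT0 : T ≠ 0 := by simpa [T] using ht
  have hT : T ≠ ∞ := ENNReal.ofReal_ne_top
  have h_exp : 0 ≤ 1 - n⁻¹ := sub_nonneg.2
    (inv_le_one_of_one_le₀ (Nat.one_le_cast.2 hE.le))
  have h_mul : (l - rearr μ f (2 * t)) * T ^ (1 - n⁻¹) ≤ C * (2 * T * A) := by
    calc _ ≤ (l - rearr μ f (2 * t)) * distribFn μ f l ^ (1 - n⁻¹) := by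
          gcongr
          exact (lt_distribFn_of_lt_rearr hl0 hl).le
      _ ≤ C * ∫⁻ x in {x | rearr μ f (2 * t) < ENNReal.ofReal |f x|}, ‖fderiv ℝ f x‖ₑ ∂μ :=
          hC f hf h_supp _ _
      _ ≤ C * (2 * T * A) := by
          gcongr
          simpa [T, A, ENNReal.ofReal_mul] using setLIntegral_le_mul_dyadicAverage
            (fun x => ‖fderiv ℝ f x‖) (distribFn_rearr_le μ f (2 * t))
  have h_split : T = T ^ n⁻¹ * T ^ (1 - n⁻¹) := by
    rw [← ENNReal.rpow_add _ _ hT0 hT, add_sub_cancel, ENNReal.rpow_one]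
  rw [← tsub_le_iff_left, ← ENNReal.mul_le_mul_iff_left
    (ENNReal.rpow_pos (pos_iff_ne_zero.2 hT0) hT).ne' (ENNReal.rpow_ne_top_of_nonneg h_exp hT)]
  refine h_mul.trans_eq ?_
  nth_rewrite 1 [h_split]
  push_cast
  ring

lemma exists_rearr_le_tsum_dyadicAverage (hE : 1 < finrank ℝ E) :
    ∃ C : NNReal, ∀ f : E → ℝ, ContDiff ℝ 1 f → HasCompactSupport f → ∀ t : ℝ, 0 < t →
      rearr μ f t ≤ C * ∑' k : ℕ, ENNReal.ofReal (2 ^ k * t) ^ (finrank ℝ E : ℝ)⁻¹ *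
        dyadicAverage μ (fun x => ‖fderiv ℝ f x‖) (2 ^ k * t) := by
  obtain ⟨C, hC⟩ := exists_rearr_le_rearr_two_mul_add μ hE
  refine ⟨C, fun f hf h_supp t ht => ?_⟩
  have h_support : μ (Function.support f) ≠ ∞ :=
    ((measure_mono (subset_tsupport f)).trans_lt h_supp.isCompact.measure_lt_top).ne
  have h_step (k : ℕ) := hC f hf h_supp (2 ^ k * t) (by positivity)
  simp only [← mul_assoc (2 : ℝ), ← pow_succ'] at h_step
  simpa [ENNReal.tsum_mul_left] using
    le_tsum_of_le_add_of_tendsto_zero h_step (tendsto_rearr_two_pow_mul h_support ht)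

lemma exists_eLpNorm_rpow_mul_rearr_le (hE : 1 < finrank ℝ E) {q : ℝ≥0∞} (hq : 1 ≤ q) {β : ℝ}
    (hβ : 0 < β) : ∃ C : ℝ≥0∞, C ≠ ∞ ∧ ∀ f : E → ℝ, ContDiff ℝ 1 f → HasCompactSupport f →
      eLpNorm (fun t => ENNReal.ofReal t ^ β * rearr μ f t) q mulHaarReal ≤
        C * eLpNorm (fun t => ENNReal.ofReal t ^ (β + (finrank ℝ E : ℝ)⁻¹) *
          dyadicAverage μ (fun x => ‖fderiv ℝ f x‖) t) q mulHaarReal := by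
  obtain ⟨C, hC⟩ := exists_rearr_le_tsum_dyadicAverage μ hE
  refine ⟨C * ∑' k : ℕ, ENNReal.ofReal ((1 / 2) ^ k) ^ β, ENNReal.mul_ne_top ENNReal.coe_ne_top
    (tsum_ofReal_pow_rpow_ne_top (by norm_num) (by norm_num) hβ), fun f hf h_supp => ?_⟩
  set n : ℝ := (finrank ℝ E : ℝ)
  let F (t : ℝ) : ℝ≥0∞ := ENNReal.ofReal t ^ n⁻¹ * dyadicAverage μ (fun x => ‖fderiv ℝ f x‖) t
  have hF : Measurable F := by fun_prop
  have h_ratio (k : ℕ) :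
      1 * ENNReal.ofReal (2 ^ k) ^ (-β) = ENNReal.ofReal ((1 / 2) ^ k) ^ β := by
    rw [one_mul, ENNReal.rpow_neg, ← ENNReal.inv_rpow, ← ENNReal.ofReal_inv_of_pos (by positivity),
      one_div, inv_pow]
  calc eLpNorm (fun t => ENNReal.ofReal t ^ β * rearr μ f t) q mulHaarReal
      ≤ eLpNorm (fun t => C * (ENNReal.ofReal t ^ β * ∑' k : ℕ, 1 * F (2 ^ k * t))) q
          mulHaarReal := by
        refine eLpNorm_mono_enorm_ae ?_
        filter_upwards [ae_mulHaarReal_pos] with t ht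
        simp only [enorm_eq_self, one_mul]
        rw [mul_left_comm]
        gcongr
        exact hC f hf h_supp t ht
    _ ≤ C * ((∑' k : ℕ, 1 * ENNReal.ofReal (2 ^ k) ^ (-β)) *
          eLpNorm (fun t => ENNReal.ofReal t ^ β * F t) q mulHaarReal) := by
        rw [eLpNorm_const_mul_of_ennreal _ (by fun_prop)]
        gcongr
        exact eLpNorm_rpow_mul_tsum_dilation_le hF hq β _ fun k => by positivity
    _ = _ := by
        simp only [h_ratio, ← mul_assoc]
        congr 1
        refine eLpNorm_congr_ae ?_
        filter_upwards [ae_mulHaarReal_pos] with t ht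
        rw [ENNReal.rpow_add _ _ (by simpa using ht) ENNReal.ofReal_ne_top, mul_assoc]

lemma exists_lorentz_le_lorentz_fderiv {p : ℝ} (hp1 : 1 < p) (hp : p < finrank ℝ E) {q : ℝ≥0∞}
    (hq : 1 ≤ q) : ∃ C : ℝ≥0∞, C ≠ ∞ ∧ ∀ f : E → ℝ, ContDiff ℝ 1 f → HasCompactSupport f →
      lorentz μ (ENNReal.ofReal (finrank ℝ E * p / (finrank ℝ E - p))) q f ≤
        C * lorentz μ (ENNReal.ofReal p) q (fun x => ‖fderiv ℝ f x‖) := by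
  have hp0 : 0 < p := zero_lt_one.trans hp1
  have hq0 : q ≠ 0 := (zero_lt_one.trans_le hq).ne'
  set n : ℝ := (finrank ℝ E : ℝ) with hn
  have hn0 : 0 < n := hp0.trans hp
  have h_sub : 0 < n - p := sub_pos.2 hp
  have h_conj : (ENNReal.ofReal (n * p / (n - p))).toReal⁻¹ = p⁻¹ - n⁻¹ := by
    rw [ENNReal.toReal_ofReal (by positivity)]
    field_simp
  obtain ⟨C, hC_top, hC⟩ := exists_eLpNorm_rpow_mul_rearr_le μ
    (Nat.one_lt_cast.1 (hp1.trans hp)) hq (sub_pos.2 (inv_strictAnti₀ hp0 hp))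
  rw [← hn, sub_add_cancel] at hC
  have h_sum : ∑' k : ℕ, ENNReal.ofReal ((1 / 2) ^ k) ^ (1 - p⁻¹) ≠ ∞ :=
    tsum_ofReal_pow_rpow_ne_top (by norm_num) (by norm_num)
      (sub_pos.2 (inv_lt_one_of_one_lt₀ hp1))
  refine ⟨_, ENNReal.mul_ne_top hC_top h_sum, fun f hf h_supp => ?_⟩
  rw [lorentz_eq_eLpNorm μ f _ hq0, lorentz_eq_eLpNorm μ _ _ hq0, h_conj,
    ENNReal.toReal_ofReal hp0.le, mul_assoc]
  refine (hC f hf h_supp).trans ?_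
  gcongr
  exact eLpNorm_rpow_mul_dyadicAverage_le μ _ hq _

end Sobolev

open Module in
theorem stmt_19_general {E : Type*} [NormedAddCommGroup E] [NormedSpace ℝ E]
    [FiniteDimensional ℝ E] [MeasurableSpace E] [BorelSpace E] (μ : Measure E) [μ.IsAddHaarMeasure]
    {p : ℝ} (hp1 : 1 < p) (hp : p < finrank ℝ E) {a : ℝ} (ha0 : 0 ≤ a) (ha1 : a ≤ 1)
    {r t u v w : ℝ≥0∞} (ht : t ≠ 0) (hv : 1 ≤ v) (hw : w ≠ 0)
    (hrt : 1 / r = ENNReal.ofReal a / ENNReal.ofReal (finrank ℝ E * p / (finrank ℝ E - p)) +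
      ENNReal.ofReal (1 - a) / t)
    (huvw : 1 / u = ENNReal.ofReal a / v + ENNReal.ofReal (1 - a) / w) :
    ∃ c : ℝ, 0 < c ∧ ∀ f : E → ℝ, ContDiff ℝ 1 f → HasCompactSupport f →
      lorentz μ r u f ≤ ENNReal.ofReal c *
        lorentz μ (ENNReal.ofReal p) v (fun x => ‖fderiv ℝ f x‖) ^ a *
        lorentz μ t w f ^ (1 - a) := by
  obtain ⟨C, hC_top, hC⟩ := exists_lorentz_le_lorentz_fderiv μ hp1 hp hv
  have h_conj : ENNReal.ofReal (finrank ℝ E * p / (finrank ℝ E - p)) ≠ 0 := by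
    have hp0 : 0 < p := zero_lt_one.trans hp1
    exact (ENNReal.ofReal_pos.2
      (div_pos (mul_pos (hp0.trans hp) hp0) (sub_pos.2 hp))).ne'
  have h_const : C ^ a ≤ ENNReal.ofReal ((C ^ a).toReal + 1) :=
    (ENNReal.ofReal_toReal (ENNReal.rpow_ne_top_of_nonneg ha0 hC_top)).symm.trans_le
      (ENNReal.ofReal_le_ofReal (le_add_of_nonneg_right zero_le_one))
  refine ⟨(C ^ a).toReal + 1, by positivity, fun f hf h_supp => ?_⟩
  refine (lorentz_le_lorentz_rpow_mul_lorentz_rpow μ f h_conj ht (zero_lt_one.trans_le hv).ne' hw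
    ha0 ha1 hrt huvw).trans ?_
  gcongr
  refine (ENNReal.rpow_le_rpow (hC f hf h_supp) ha0).trans ?_
  rw [ENNReal.mul_rpow_of_nonneg _ _ ha0]
  gcongr

/-- Gagliardo–Nirenberg inequality in Lorentz norms on ℝⁿ (Remark 4.2 of the paper):
for `p* = np/(n-p)`, `1/r = a/p* + (1-a)/t`, `1/u = a/v + (1-a)/w`,
`‖f‖_{r,u} ≤ c ‖|∇f|‖_{p,v}^a ‖f‖_{t,w}^{1-a}`. -/
theorem stmt_19 (n : ℕ) (hn : 2 ≤ n) (p : ℝ) (hp1 : 1 < p) (hpn : p < n)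
    (a : ℝ) (ha0 : 0 ≤ a) (ha1 : a ≤ 1)
    (r t : ℝ≥0∞) (hr : 1 < r) (ht : 1 < t)
    (u v w : ℝ≥0∞) (hu : 1 ≤ u) (hv : 1 ≤ v) (hw : 1 ≤ w)
    (hrt : 1 / r = ENNReal.ofReal a / ENNReal.ofReal ((n : ℝ) * p / ((n : ℝ) - p)) +
      ENNReal.ofReal (1 - a) / t)
    (huvw : 1 / u = ENNReal.ofReal a / v + ENNReal.ofReal (1 - a) / w) :
    ∃ c : ℝ, 0 < c ∧ ∀ f : EuclideanSpace ℝ (Fin n) → ℝ,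
      ContDiff ℝ (⊤ : ℕ∞) f → HasCompactSupport f →
      lorentz volume r u f ≤
        ENNReal.ofReal c *
          lorentz volume (ENNReal.ofReal p) v (fun x => ‖gradient f x‖) ^ a *
          lorentz volume t w f ^ (1 - a) := by
  have h := stmt_19_general (E := EuclideanSpace ℝ (Fin n)) volume hp1 (by simpa using hpn) ha0 ha1
    (zero_lt_one.trans ht).ne' hv (zero_lt_one.trans_le hw).ne' (by simpa using hrt) huvw
  simpa [gradient] using h.imp fun c hc => ⟨hc.1, fun f hf => hc.2 f (hf.of_le (mod_cast le_top))⟩
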